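/- arXiv:1905.04375 — 8 statements merged into one kernel-verified Lean document; each statement's English description precedes it below -/
import Mathlib

section
/- Let (Γ,+,d) be a metric Abelian monoid whose pseudometric d is homogeneous. Then d is translation invariant: for all γ₁,γ₂,η ∈ Γ one has d(γ₁+η, γ₂+η) = d(γ₁,γ₂). -/
open MeasureTheory Filter

/-- A pseudometric on `Γ`: reflexive-zero, symmetric, triangle inequality. -/
def IsPseudoMetric {Γ : Type*} (d : Γ → Γ → ℝ) : Prop :=
  (∀ x, d x x = 0) ∧ (∀ x y, d x y = d y x) ∧ (∀ x y z, d x z ≤ d x y + d y z)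

/-- A metric Abelian monoid: an additive commutative monoid with a pseudometric
for which addition is 1-Lipschitz in each argument. -/
def IsMetricAbelianMonoid {Γ : Type*} [AddCommMonoid Γ] (d : Γ → Γ → ℝ) : Prop :=
  IsPseudoMetric d ∧ ∀ a b c : Γ, d (a + b) (a + c) ≤ d b c

/-- `φ : [1,∞) → [0,∞)` is admissible with constant `D ≥ 0`: non-decreasing,
summable against `dt/t²`, and `s·∫_s^∞ φ(t)/t² dt ≤ (D/8)·φ(s)` for all `s ≥ 1`. -/
def AdmissibleWith (φ : ℝ → ℝ) (D : ℝ) : Prop :=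
  (∀ t, 1 ≤ t → 0 ≤ φ t) ∧ MonotoneOn φ (Set.Ici 1) ∧ 0 ≤ D ∧
  (∀ s, 1 ≤ s → IntegrableOn (fun t => φ t / t ^ 2) (Set.Ioi s)) ∧
  (∀ s, 1 ≤ s → s * ∫ t in Set.Ioi s, φ t / t ^ 2 ≤ D / 8 * φ s)

def Admissible (φ : ℝ → ℝ) : Prop := ∃ D, AdmissibleWith φ D

/-- A sequence `γ : ℕ → Γ` is quasi-linear with defect bounded by `φ`
(with respect to the pseudometric `d`). -/
def QuasiLinear {Γ : Type*} [AddCommMonoid Γ] (d : Γ → Γ → ℝ) (φ : ℝ → ℝ)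
    (γ : ℕ → Γ) : Prop :=
  γ 0 = 0 ∧ ∀ m n : ℕ, 1 ≤ m → 1 ≤ n →
    d (γ (m + n)) (γ m + γ n) ≤ φ ((m + n : ℕ) : ℝ)

/-- The asymptotic distance `lim_{n→∞} d(γ₁(n),γ₂(n))/n`, realized as a `limsup`
(for quasi-linear sequences the limit exists, so this is that limit). -/
noncomputable def dista {Γ : Type*} (d : Γ → Γ → ℝ) (γ₁ γ₂ : ℕ → Γ) : ℝ :=
  Filter.limsup (fun n : ℕ => d (γ₁ n) (γ₂ n) / n) Filter.atTop

/-!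
Exchanging copies of `a` for copies of `b` one at a time in `n • a + c`, each exchange borrows the
single summand `c` and costs at most `d (a + c) (b + c)`. Hence `d (n • a) (n • b)` is at most
`n * d (a + c) (b + c)` up to an error independent of `n`; if it is also at least `n * d a b`,
dividing by `n` gives `d a b ≤ d (a + c) (b + c)`.
-/

namespace IsMetricAbelianMonoid

variable {Γ : Type*} [AddCommMonoid Γ] {d : Γ → Γ → ℝ}

lemma apply_self (h : IsMetricAbelianMonoid d) (a : Γ) : d a a = 0 := h.1.1 a

lemma apply_comm (h : IsMetricAbelianMonoid d) (a b : Γ) : d a b = d b a := h.1.2.1 a b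

lemma apply_triangle (h : IsMetricAbelianMonoid d) (a b c : Γ) : d a c ≤ d a b + d b c :=
  h.1.2.2 a b c

lemma apply_add_left_le (h : IsMetricAbelianMonoid d) (a b c : Γ) :
    d (c + a) (c + b) ≤ d a b :=
  h.2 c a b

lemma apply_add_right_le (h : IsMetricAbelianMonoid d) (a b c : Γ) :
    d (a + c) (b + c) ≤ d a b := by
  simpa only [add_comm c] using h.apply_add_left_le a b c

lemma apply_self_add_le (h : IsMetricAbelianMonoid d) (a c : Γ) : d a (a + c) ≤ d 0 c := by
  simpa only [add_zero] using h.apply_add_left_le 0 c a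

lemma apply_nsmul_add_le (h : IsMetricAbelianMonoid d) (a b c : Γ) (n : ℕ) :
    d (n • a + c) (n • b + c) ≤ n * d (a + c) (b + c) := by
  induction n with
  | zero => simp [h.apply_self]
  | succ n ih =>
    have exchange_one : d ((n + 1) • a + c) (b + (n • a + c)) ≤ d (a + c) (b + c) := by
      simpa only [succ_nsmul, add_assoc, add_left_comm b] using
        h.apply_add_left_le (a + c) (b + c) (n • a)
    have exchange_rest :
        d (b + (n • a + c)) ((n + 1) • b + c) ≤ d (n • a + c) (n • b + c) := by
      simpa only [succ_nsmul', add_assoc] using h.apply_add_left_le (n • a + c) (n • b + c) b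
    calc
      d ((n + 1) • a + c) ((n + 1) • b + c)
        ≤ d ((n + 1) • a + c) (b + (n • a + c)) + d (b + (n • a + c)) ((n + 1) • b + c) :=
          h.apply_triangle _ _ _
      _ ≤ d (a + c) (b + c) + n * d (a + c) (b + c) :=
          add_le_add exchange_one (exchange_rest.trans ih)
      _ = (n + 1 : ℕ) * d (a + c) (b + c) := by push_cast; ring

lemma apply_nsmul_nsmul_le (h : IsMetricAbelianMonoid d) (a b c : Γ) (n : ℕ) :
    d (n • a) (n • b) ≤ n * d (a + c) (b + c) + 2 * d 0 c :=
  calc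
    d (n • a) (n • b)
      ≤ d (n • a) (n • a + c) + d (n • a + c) (n • b) := h.apply_triangle _ _ _
    _ ≤ d (n • a) (n • a + c) + (d (n • a + c) (n • b + c) + d (n • b + c) (n • b)) := by
        gcongr; exact h.apply_triangle _ _ _
    _ ≤ d 0 c + (n * d (a + c) (b + c) + d 0 c) := by
        gcongr
        · exact h.apply_self_add_le _ _
        · exact h.apply_nsmul_add_le a b c n
        · exact (h.apply_comm _ _).trans_le (h.apply_self_add_le _ _)
    _ = n * d (a + c) (b + c) + 2 * d 0 c := by ring

end IsMetricAbelianMonoid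

theorem mam_homogeneous_translation_invariant_general {Γ : Type*} [AddCommMonoid Γ]
    {d : Γ → Γ → ℝ} (h : IsMetricAbelianMonoid d) {γ₁ γ₂ : Γ}
    (hlin : ∀ n : ℕ, n * d γ₁ γ₂ ≤ d (n • γ₁) (n • γ₂)) (η : Γ) :
    d (γ₁ + η) (γ₂ + η) = d γ₁ γ₂ := by
  refine (h.apply_add_right_le γ₁ γ₂ η).antisymm (le_of_not_gt fun hlt => ?_)
  obtain ⟨n, hn⟩ : ∃ n : ℕ, 2 * d 0 η < n • (d γ₁ γ₂ - d (γ₁ + η) (γ₂ + η)) :=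
    exists_lt_nsmul (sub_pos.mpr hlt) _
  rw [nsmul_eq_mul, mul_sub] at hn
  linarith [hlin n, h.apply_nsmul_nsmul_le γ₁ γ₂ η n]

/-- If the pseudometric of a metric Abelian monoid is homogeneous, then it is
translation invariant. -/
theorem mam_homogeneous_translation_invariant {Γ : Type*} [AddCommMonoid Γ]
    (d : Γ → Γ → ℝ) (h : IsMetricAbelianMonoid d)
    (hhom : ∀ (n : ℕ) (γ γ' : Γ), d (n • γ) (n • γ') = (n : ℝ) * d γ γ')
    (γ₁ γ₂ η : Γ) :
    d (γ₁ + η) (γ₂ + η) = d γ₁ γ₂ :=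
  mam_homogeneous_translation_invariant_general h (fun n => (hhom n γ₁ γ₂).ge) η
end

section
/- Every admissible function is sub-linear: if φ is admissible, then φ(t)/t → 0 as t → ∞. -/
open MeasureTheory Filter

/-! For `p > 0` the weight `t ^ (-(p + 1))` has integral `s ^ (-p) / p` over `(s, ∞)`. If `f` is
monotone, then `f s * s ^ (-p) / p` is therefore at most the integral of `f t / t ^ (p + 1)` over
`(s, ∞)`, which is the tail of a convergent integral. Sublinearity is the case `p = 1`. -/

section

open Set Topology

theorem mul_setIntegral_le_setIntegral_mul {X : Type*} [MeasurableSpace X] {μ : Measure X}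
    {s : Set X} {f w : X → ℝ} {c : ℝ} (hs : MeasurableSet s) (hf : ∀ x ∈ s, c ≤ f x)
    (hw : ∀ x ∈ s, 0 ≤ w x) (hw_int : IntegrableOn w s μ)
    (hfw_int : IntegrableOn (fun x => f x * w x) s μ) :
    c * ∫ x in s, w x ∂μ ≤ ∫ x in s, f x * w x ∂μ := by
  rw [← integral_const_mul]
  exact setIntegral_mono_on (hw_int.const_mul c) hfw_int hs fun x hx =>
    mul_le_mul_of_nonneg_right (hf x hx) (hw x hx)

theorem tendsto_mul_integral_Ioi_zero_of_monotoneOn {μ : Measure ℝ} {f w : ℝ → ℝ} {a : ℝ}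
    (hf : MonotoneOn f (Ici a)) (hw : ∀ t ∈ Ioi a, 0 ≤ w t) (hw_int : IntegrableOn w (Ioi a) μ)
    (hfw_int : IntegrableOn (fun t => f t * w t) (Ioi a) μ) :
    Tendsto (fun s => f s * ∫ t in Ioi s, w t ∂μ) atTop (𝓝 0) := by
  have lower_tendsto : Tendsto (fun s => f a * ∫ t in Ioi s, w t ∂μ) atTop (𝓝 0) := by
    simpa only [mul_zero, id_eq] using (tendsto_integral_Ioi_zero tendsto_id).const_mul (f a)
  have upper_tendsto : Tendsto (fun s => ∫ t in Ioi s, f t * w t ∂μ) atTop (𝓝 0) :=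
    tendsto_integral_Ioi_zero tendsto_id
  refine tendsto_of_tendsto_of_tendsto_of_le_of_le' lower_tendsto upper_tendsto ?_ ?_ <;>
    filter_upwards [eventually_ge_atTop a] with s has
  · have tail_nonneg : 0 ≤ ∫ t in Ioi s, w t ∂μ :=
      setIntegral_nonneg measurableSet_Ioi fun t ht => hw t (Ioi_subset_Ioi has ht)
    exact mul_le_mul_of_nonneg_right (hf self_mem_Ici has has) tail_nonneg
  · have hsub : Ioi s ⊆ Ioi a := Ioi_subset_Ioi has
    exact mul_setIntegral_le_setIntegral_mul measurableSet_Ioi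
      (fun t ht => hf has (Ioi_subset_Ici has ht) ht.le) (fun t ht => hw t (hsub ht))
      (hw_int.mono_set hsub) (hfw_int.mono_set hsub)

theorem mul_integral_Ioi_rpow_neg_add_one {p s : ℝ} (hp : 0 < p) (hs : 0 < s) :
    p * ∫ t in Ioi s, t ^ (-(p + 1)) = s ^ (-p) := by
  rw [integral_Ioi_rpow_of_lt (by linarith) hs, show -(p + 1) + 1 = -p by ring, neg_div_neg_eq,
    mul_div_cancel₀ _ hp.ne']

theorem admissible_sublinear_general {f : ℝ → ℝ} {a p : ℝ} (ha : 0 < a) (hp : 0 < p)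
    (hf : MonotoneOn f (Ici a)) (hf_int : IntegrableOn (fun t => f t / t ^ (p + 1)) (Ioi a)) :
    Tendsto (fun t => f t / t ^ p) atTop (𝓝 0) := by
  have div_rpow_eq {t : ℝ} (ht : 0 < t) (q : ℝ) : f t / t ^ q = f t * t ^ (-q) := by
    rw [Real.rpow_neg ht.le, div_eq_mul_inv]
  have weighted_int : IntegrableOn (fun t => f t * t ^ (-(p + 1))) (Ioi a) :=
    hf_int.congr_fun (fun t ht => div_rpow_eq (ha.trans ht) (p + 1)) measurableSet_Ioi
  have tail_tendsto := tendsto_mul_integral_Ioi_zero_of_monotoneOn hf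
    (fun t ht => Real.rpow_nonneg (ha.trans ht).le _)
    (integrableOn_Ioi_rpow_of_lt (by linarith) ha) weighted_int
  have scaled_tendsto := tail_tendsto.const_mul p
  rw [mul_zero] at scaled_tendsto
  refine scaled_tendsto.congr' ?_
  filter_upwards [eventually_gt_atTop 0] with s hs
  rw [mul_left_comm, mul_integral_Ioi_rpow_neg_add_one hp hs, div_rpow_eq hs]

end

/-- Every admissible function is sub-linear: `φ t / t → 0` as `t → ∞`. -/
theorem admissible_sublinear (φ : ℝ → ℝ) (hφ : Admissible φ) :
    Filter.Tendsto (fun t : ℝ => φ t / t) Filter.atTop (nhds 0) := by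
  obtain ⟨_, -, hmono, -, hint, -⟩ := hφ
  simpa using admissible_sublinear_general one_pos one_pos hmono
    (by simpa [one_add_one_eq_two] using hint 1 le_rfl)
end

section
/- (De Bruijn–Erdős generalization of Fekete's Lemma, as used in the paper.) Let φ be an admissible function and let a: ℕ → [0,∞) satisfy a(m+n) ≤ a(m) + a(n) + φ(m+n) for all m,n ≥ 1. Then the limit lim_{n→∞} a(n)/n exists and is finite. -/
open MeasureTheory Filter

/-!
Call a pair balanced if `m ≤ 2 * n` and `n ≤ 2 * m`. For such a pair with sum `s`, both `3m/2` and
`3n/2` are at most `s`. Writing `T s = ∫ t in Ioi s, φ t / t ^ 2`, the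
correction `ψ s = 3 * s * T (3s/2)` therefore satisfies `ψ m + ψ n ≥ 3 * s * T s`, while
monotonicity of `φ` on `[s, 3s/2]` gives `3 * s * T s - ψ s ≥ φ s`. So `φ s` is absorbed by passing
from `a` to `a + ψ`, which is subadditive on balanced pairs; and `ψ n / n → 0` because the integral
converges.

For such a sequence `u` and any `k`, the sequence `v n = u n - (u k / k) * n` has the same property
and vanishes at `k`. Balanced splitting shows that `v` is nonpositive at the multiples of `k`, and
every `n ≥ 2 * k` is a balanced sum of a multiple of `k` and a smaller number, so `v` is bounded
above. Hence `limsup u n / n ≤ u k / k`, and `u n / n` converges to its infimum as in Fekete's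
lemma.
-/

open Set Topology

lemma exists_balanced_add_mul {k n : ℕ} (hk : 0 < k) (hn : 2 * k ≤ n) :
    ∃ q l, 0 < q ∧ q * k ≤ 2 * l ∧ l ≤ 2 * (q * k) ∧ n = q * k + l := by
  obtain ⟨p, q, r, hpq, hqp, hp, hr, rfl⟩ :
      ∃ p q r, p ≤ q ∧ q ≤ p + 1 ∧ 0 < p ∧ r < k ∧ n = (p + q) * k + r := by
    have hquot : 2 ≤ n / k := (Nat.le_div_iff_mul_le hk).2 hn
    refine ⟨n / k / 2, n / k - n / k / 2, n % k, by omega, by omega, by omega,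
      Nat.mod_lt n hk, ?_⟩
    rw [Nat.add_sub_of_le (Nat.div_le_self _ _), Nat.div_add_mod']
  have hqk : q * k ≤ 2 * p * k := Nat.mul_le_mul_right k (by omega)
  have hpk : p * k ≤ q * k := Nat.mul_le_mul_right k hpq
  have hkq : k ≤ q * k := Nat.le_mul_of_pos_left k (by omega)
  exact ⟨q, p * k + r, by omega, by linarith, by linarith, by ring⟩

/-- De Bruijn and Erdős's weakening of `Subadditive`: only pairs of positive integers whose ratio
lies between `1 / 2` and `2` are tested. If one of `m`, `n` vanishes then so does the other, hence
`0 < m` is the only positivity condition. -/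
def BalancedSubadditive (u : ℕ → ℝ) : Prop :=
  ∀ m n : ℕ, 0 < m → m ≤ 2 * n → n ≤ 2 * m → u (m + n) ≤ u m + u n

namespace BalancedSubadditive

variable {u : ℕ → ℝ}

lemma sub_linear (h : BalancedSubadditive u) (c : ℝ) :
    BalancedSubadditive fun n => u n - c * n := by
  intro m n hm hmn hnm
  push_cast
  linarith [h m n hm hmn hnm]

lemma apply_mul_le (h : BalancedSubadditive u) {k q : ℕ} (hk : 0 < k) (hq : 0 < q) :
    u (q * k) ≤ q * u k := by
  induction q using Nat.strong_induction_on with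
  | _ q ih =>
    obtain rfl | hq2 : q = 1 ∨ 2 ≤ q := by omega
    · simp
    obtain ⟨m, n, hm, hn, hmn, hnm, rfl⟩ :
        ∃ m n, 0 < m ∧ 0 < n ∧ m ≤ 2 * n ∧ n ≤ 2 * m ∧ q = m + n :=
      ⟨q / 2, q - q / 2, by omega, by omega, by omega, by omega, by omega⟩
    calc
      u ((m + n) * k) = u (m * k + n * k) := by rw [add_mul]
      _ ≤ u (m * k) + u (n * k) :=
        h _ _ (Nat.mul_pos hm hk) (by nlinarith) (by nlinarith)
      _ ≤ m * u k + n * u k := add_le_add (ih m (by omega) hm) (ih n (by omega) hn)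
      _ = (m + n : ℕ) * u k := by push_cast; ring

lemma bddAbove_range (h : BalancedSubadditive u) {k : ℕ} (hk : 0 < k) (huk : u k ≤ 0) :
    BddAbove (range u) := by
  obtain ⟨C, hC⟩ := (finite_lt_nat (2 * k)).image u |>.bddAbove
  refine ⟨C, forall_mem_range.2 fun n => ?_⟩
  induction n using Nat.strong_induction_on with
  | _ n ih =>
    obtain hn | hn := lt_or_ge n (2 * k)
    · exact hC (mem_image_of_mem u hn)
    obtain ⟨q, l, hq, hql, hlq, rfl⟩ := exists_balanced_add_mul hk hn
    have hqk : 0 < q * k := Nat.mul_pos hq hk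
    calc
      u (q * k + l) ≤ u (q * k) + u l := h _ _ hqk hql hlq
      _ ≤ q * u k + C := add_le_add (h.apply_mul_le hk hq) (ih l (by omega))
      _ ≤ C := add_le_of_nonpos_left (mul_nonpos_of_nonneg_of_nonpos q.cast_nonneg huk)

lemma exists_div_le_add_div (h : BalancedSubadditive u) {k : ℕ} (hk : 0 < k) :
    ∃ C : ℝ, ∀ n : ℕ, 0 < n → u n / n ≤ u k / k + C / n := by
  have huk : u k - u k / k * k ≤ 0 := by
    rw [div_mul_cancel₀ _ (Nat.cast_ne_zero.2 hk.ne'), sub_self]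
  obtain ⟨C, hC⟩ := (h.sub_linear (u k / k)).bddAbove_range hk huk
  refine ⟨C, fun n hn => ?_⟩
  have hn' : (0 : ℝ) < n := Nat.cast_pos.2 hn
  rw [div_le_iff₀ hn', add_mul, div_mul_cancel₀ _ hn'.ne']
  linarith [hC (mem_range_self n)]

theorem tendsto_div_sInf (h : BalancedSubadditive u)
    (hbdd : BddBelow (range fun n : ℕ => u n / n)) :
    Tendsto (fun n : ℕ => u n / n) atTop (𝓝 (sInf ((fun n : ℕ => u n / n) '' Ici 1))) := by
  refine tendsto_order.2 ⟨fun l hl => ?_, fun L hL => ?_⟩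
  · filter_upwards [eventually_ge_atTop 1] with n hn
    exact hl.trans_le (csInf_le (hbdd.mono (image_subset_range _ _)) (mem_image_of_mem _ hn))
  · obtain ⟨_, ⟨k, hk, rfl⟩, hkL⟩ := exists_lt_of_csInf_lt (nonempty_Ici.image _) hL
    obtain ⟨C, hC⟩ := h.exists_div_le_add_div hk
    have hlim : Tendsto (fun n : ℕ => u k / k + C / n) atTop (𝓝 (u k / k)) := by
      simpa using (tendsto_const_div_atTop_nhds_zero_nat C).const_add (u k / k)
    filter_upwards [hlim.eventually_lt_const hkL, eventually_gt_atTop 0] with n hnL hn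
    exact (hC n hn).trans_lt hnL

end BalancedSubadditive

lemma tendsto_setIntegral_Ioi_atTop_zero {E : Type*} [NormedAddCommGroup E] [NormedSpace ℝ E]
    {μ : Measure ℝ} {f : ℝ → E} {a : ℝ} (hf : IntegrableOn f (Ioi a) μ) :
    Tendsto (fun s => ∫ t in Ioi s, f t ∂μ) atTop (𝓝 0) := by
  have hlim := tendsto_setIntegral_of_antitone (μ := μ) (f := f)
    (fun _ => measurableSet_Ioi) antitone_Ioi ⟨a, hf⟩
  have hempty : ⋂ s : ℝ, Ioi s = ∅ :=
    iInter_eq_empty_iff.2 fun s => ⟨s, self_notMem_Ioi⟩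
  rwa [hempty, setIntegral_empty] at hlim

lemma integral_const_div_sq (c : ℝ) {a b : ℝ} (ha : 0 < a) (hb : 0 < b) :
    ∫ t in a..b, c / t ^ 2 = c * (a⁻¹ - b⁻¹) := by
  have hzero : (0 : ℝ) ∉ uIcc a b := notMem_uIcc_of_lt ha hb
  calc
    ∫ t in a..b, c / t ^ 2 = c * ∫ t in a..b, t ^ (-2 : ℤ) := by
      simp only [div_eq_mul_inv, intervalIntegral.integral_const_mul, zpow_neg, zpow_ofNat]
    _ = c * (a⁻¹ - b⁻¹) := by
      rw [integral_zpow (Or.inr ⟨by norm_num, hzero⟩), show (-2 : ℤ) + 1 = -1 by norm_num,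
        zpow_neg_one, zpow_neg_one]
      push_cast
      ring

lemma mul_inv_sub_inv_le_integral_div_sq {φ : ℝ → ℝ} {a b : ℝ} (ha : 0 < a) (hab : a ≤ b)
    (hφ : MonotoneOn φ (Icc a b)) :
    φ a * (a⁻¹ - b⁻¹) ≤ ∫ t in a..b, φ t / t ^ 2 := by
  have hcont : ContinuousOn (fun t : ℝ => (t ^ 2)⁻¹) (uIcc a b) := by
    rw [uIcc_of_le hab]
    exact (continuousOn_pow 2).inv₀ fun t ht => pow_ne_zero 2 (ha.trans_le ht.1).ne'
  have hint (ψ : ℝ → ℝ) (hψ : MonotoneOn ψ (Icc a b)) :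
      IntervalIntegrable (fun t => ψ t / t ^ 2) volume a b := by
    rw [← uIcc_of_le hab] at hψ
    exact hψ.intervalIntegrable.mul_continuousOn hcont
  rw [← integral_const_div_sq (φ a) ha (ha.trans_le hab)]
  refine intervalIntegral.integral_mono_on hab (hint _ monotoneOn_const) (hint φ hφ) fun t ht => ?_
  gcongr
  exact hφ (left_mem_Icc.2 hab) ht ht.1

/-- The tail `∫ t in (s, ∞), φ t / t ^ 2` of the integral in the growth condition on the error
term `φ`. -/
noncomputable def tailIntegral (φ : ℝ → ℝ) (s : ℝ) : ℝ := ∫ t in Ioi s, φ t / t ^ 2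

/-- A function of sublinear growth whose own subadditivity on balanced pairs has enough slack to
absorb the error term `φ`. The factor `3 / 2` is the largest `c` for which `m ≤ 2 * n` implies
`c * m ≤ m + n`, and the factor `3` is `(1 - 2 / 3)⁻¹`. -/
noncomputable def subadditiveCorrection (φ : ℝ → ℝ) (s : ℝ) : ℝ :=
  3 * s * tailIntegral φ (3 / 2 * s)

section Correction

variable {φ : ℝ → ℝ}

lemma tailIntegral_antitoneOn (hφ : ∀ t, 1 ≤ t → 0 ≤ φ t)
    (hint : IntegrableOn (fun t => φ t / t ^ 2) (Ioi 1)) :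
    AntitoneOn (tailIntegral φ) (Ici 1) := by
  intro a ha b _ hab
  refine setIntegral_mono_set (hint.mono_set (Ioi_subset_Ioi ha)) ?_
    (Ioi_subset_Ioi hab).eventuallyLE
  filter_upwards [ae_restrict_mem measurableSet_Ioi] with t ht
  exact div_nonneg (hφ t (le_trans ha (le_of_lt ht))) (sq_nonneg t)

lemma tendsto_subadditiveCorrection_div
    (hint : IntegrableOn (fun t => φ t / t ^ 2) (Ioi 1)) :
    Tendsto (fun s => subadditiveCorrection φ s / s) atTop (𝓝 0) := by
  have htail : Tendsto (tailIntegral φ) atTop (𝓝 0) := tendsto_setIntegral_Ioi_atTop_zero hint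
  have hscaled : Tendsto (fun s : ℝ => 3 * tailIntegral φ (3 / 2 * s)) atTop (𝓝 0) := by
    simpa using
      (htail.comp (tendsto_id.const_mul_atTop (by norm_num : (0 : ℝ) < 3 / 2))).const_mul 3
  refine hscaled.congr' ?_
  filter_upwards [eventually_ne_atTop 0] with s hs
  rw [subadditiveCorrection, mul_right_comm, mul_div_cancel_right₀ _ hs]

lemma apply_add_subadditiveCorrection_le (hmono : MonotoneOn φ (Ici 1))
    (hint : IntegrableOn (fun t => φ t / t ^ 2) (Ioi 1)) {s : ℝ} (hs : 1 ≤ s) :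
    φ s + subadditiveCorrection φ s ≤ 3 * s * tailIntegral φ s := by
  have hs0 : 0 < s := by linarith
  have hle : s ≤ 3 / 2 * s := by linarith
  have hsplit : (∫ t in s..3 / 2 * s, φ t / t ^ 2) + tailIntegral φ (3 / 2 * s) =
      tailIntegral φ s :=
    intervalIntegral.integral_interval_add_Ioi (hint.mono_set (Ioi_subset_Ioi hs))
      (hint.mono_set (Ioi_subset_Ioi (hs.trans hle)))
  have hlower : φ s * (s⁻¹ - (3 / 2 * s)⁻¹) ≤ ∫ t in s..3 / 2 * s, φ t / t ^ 2 :=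
    mul_inv_sub_inv_le_integral_div_sq hs0 hle
      (hmono.mono fun t ht => hs.trans ht.1)
  calc
    φ s + subadditiveCorrection φ s
        = 3 * s * (φ s * (s⁻¹ - (3 / 2 * s)⁻¹) + tailIntegral φ (3 / 2 * s)) := by
      rw [subadditiveCorrection]
      field_simp
      ring
    _ ≤ 3 * s * tailIntegral φ s := by
      rw [← hsplit]
      gcongr

lemma apply_add_subadditiveCorrection_add_le (hφ : ∀ t, 1 ≤ t → 0 ≤ φ t)
    (hmono : MonotoneOn φ (Ici 1)) (hint : IntegrableOn (fun t => φ t / t ^ 2) (Ioi 1))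
    {x y : ℝ} (hx : 1 ≤ x) (hy : 1 ≤ y) (hxy : x ≤ 2 * y) (hyx : y ≤ 2 * x) :
    φ (x + y) + subadditiveCorrection φ (x + y) ≤
      subadditiveCorrection φ x + subadditiveCorrection φ y := by
  have htail {z : ℝ} (hz : 1 ≤ z) (hle : 3 / 2 * z ≤ x + y) :
      3 * z * tailIntegral φ (x + y) ≤ subadditiveCorrection φ z :=
    mul_le_mul_of_nonneg_left
      (tailIntegral_antitoneOn hφ hint (mem_Ici.2 (by linarith)) (mem_Ici.2 (by linarith)) hle)
      (by linarith)
  calc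
    φ (x + y) + subadditiveCorrection φ (x + y)
        ≤ 3 * (x + y) * tailIntegral φ (x + y) :=
      apply_add_subadditiveCorrection_le hmono hint (by linarith)
    _ = 3 * x * tailIntegral φ (x + y) + 3 * y * tailIntegral φ (x + y) := by ring
    _ ≤ subadditiveCorrection φ x + subadditiveCorrection φ y :=
      add_le_add (htail hx (by linarith)) (htail hy (by linarith))

lemma balancedSubadditive_add_correction (hφ : ∀ t, 1 ≤ t → 0 ≤ φ t)
    (hmono : MonotoneOn φ (Ici 1)) (hint : IntegrableOn (fun t => φ t / t ^ 2) (Ioi 1))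
    {a : ℕ → ℝ}
    (hsub : ∀ m n : ℕ, 0 < m → m ≤ 2 * n → n ≤ 2 * m →
      a (m + n) ≤ a m + a n + φ ((m + n : ℕ) : ℝ)) :
    BalancedSubadditive fun n => a n + subadditiveCorrection φ n := by
  intro m n hm hmn hnm
  have hn : 0 < n := by omega
  have hcorr := apply_add_subadditiveCorrection_add_le hφ hmono hint
    (x := m) (y := n) (by exact_mod_cast hm) (by exact_mod_cast hn)
    (by exact_mod_cast hmn) (by exact_mod_cast hnm)
  have ha := hsub m n hm hmn hnm
  push_cast at ha ⊢
  linarith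

end Correction

theorem deBruijn_erdos_fekete_general {φ : ℝ → ℝ} (hφ : ∀ t, 1 ≤ t → 0 ≤ φ t)
    (hmono : MonotoneOn φ (Ici 1)) (hint : IntegrableOn (fun t => φ t / t ^ 2) (Ioi 1))
    {a : ℕ → ℝ} (hbdd : BddBelow (range fun n : ℕ => a n / n))
    (hsub : ∀ m n : ℕ, 0 < m → m ≤ 2 * n → n ≤ 2 * m →
      a (m + n) ≤ a m + a n + φ ((m + n : ℕ) : ℝ)) :
    ∃ L : ℝ, Tendsto (fun n : ℕ => a n / n) atTop (𝓝 L) := by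
  set u : ℕ → ℝ := fun n => a n + subadditiveCorrection φ n with hu
  have hcorr : Tendsto (fun n : ℕ => subadditiveCorrection φ n / n) atTop (𝓝 0) :=
    (tendsto_subadditiveCorrection_div hint).comp tendsto_natCast_atTop_atTop
  have hubdd : BddBelow (range fun n : ℕ => u n / n) := by
    obtain ⟨c, hc⟩ := hbdd
    obtain ⟨d, hd⟩ := hcorr.bddBelow_range
    refine ⟨c + d, forall_mem_range.2 fun n => ?_⟩
    rw [hu, add_div]
    exact add_le_add (hc (mem_range_self n)) (hd (mem_range_self n))
  have hlim := (balancedSubadditive_add_correction hφ hmono hint hsub).tendsto_div_sInf hubdd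
  refine ⟨_, (hlim.sub hcorr).congr fun n => ?_⟩
  rw [← sub_div, add_sub_cancel_right]

/-- De Bruijn–Erdős generalization of Fekete's Lemma: if `a : ℕ → [0,∞)` is
subadditive up to an admissible function `φ`, then `a n / n` converges to a
finite limit. -/
theorem deBruijn_erdos_fekete (φ : ℝ → ℝ) (hφ : Admissible φ)
    (a : ℕ → ℝ) (ha0 : ∀ n, 0 ≤ a n)
    (hsub : ∀ m n : ℕ, 1 ≤ m → 1 ≤ n →
      a (m + n) ≤ a m + a n + φ ((m + n : ℕ) : ℝ)) :
    ∃ L : ℝ, Filter.Tendsto (fun n : ℕ => a n / n) Filter.atTop (nhds L) := by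
  obtain ⟨D, hφ0, hmono, -, hint, -⟩ := hφ
  exact deBruijn_erdos_fekete_general hφ0 hmono (hint 1 le_rfl)
    ⟨0, forall_mem_range.2 fun n => div_nonneg (ha0 n) n.cast_nonneg⟩
    fun m n hm _ _ => hsub m n hm (by omega)
end

section
/- Let (Γ,+,d) be a metric Abelian monoid, let φ₁, φ₂ be admissible functions, and let γ̄₁ be a quasi-linear sequence with defect bounded by φ₁ and γ̄₂ a quasi-linear sequence with defect bounded by φ₂. Then the limit dista(γ̄₁,γ̄₂) := lim_{n→∞} (1/n)·d(γ₁(n), γ₂(n)) exists and is finite. -/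
open MeasureTheory Filter

/-!
The sequence `a n = d (γ₁ n) (γ₂ n)` is nonnegative and subadditive up to the error `φ = φ₁ + φ₂`,
so the theorem of de Bruijn and Erdős applies. Writing `k ≤ 2 ^ J` copies of `n` as a balanced
binary sum turns the error in `a (k * n) ≤ k * a n + …` into a dyadic sum of values of `φ`, which is
at most `8 * k * n` times the tail integral `T (2 * n)` of `φ t / t ^ 2`. Dividing by `k * n`, every
value `a n / n + 8 * T (2 * n)` bounds `a p / p` asymptotically; as `T` tends to zero, `a n / n`
cannot oscillate.
-/

open Set Topology

section InvSqTail

/-- The tail integral `∫ₛ^∞ φ(t)/t² dt`, which controls the error accumulated by a sequence that is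
subadditive up to `φ`; junk value `0` when `φ t / t ^ 2` is not integrable on `(s, ∞)`. -/
noncomputable def invSqTail (φ : ℝ → ℝ) (s : ℝ) : ℝ := ∫ t in Ioi s, φ t / t ^ 2

theorem tendsto_invSqTail (φ : ℝ → ℝ) : Tendsto (invSqTail φ) atTop (𝓝 0) :=
  tendsto_integral_Ioi_zero tendsto_id

variable {φ : ℝ → ℝ} (hφ₀ : ∀ t, 1 ≤ t → 0 ≤ φ t)

include hφ₀ in
theorem invSqTail_nonneg {s : ℝ} (hs : 1 ≤ s) : 0 ≤ invSqTail φ s :=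
  setIntegral_nonneg measurableSet_Ioi fun t ht =>
    div_nonneg (hφ₀ t (hs.trans (mem_Ioi.1 ht).le)) (sq_nonneg t)

variable (hφi : IntegrableOn (fun t => φ t / t ^ 2) (Ioi 1))

include hφ₀ hφi in
theorem invSqTail_antitoneOn : AntitoneOn (invSqTail φ) (Ici 1) := fun _ hs _ _ hst =>
  setIntegral_mono_set (hφi.mono_set (Ioi_subset_Ioi hs))
    (ae_restrict_of_forall_mem measurableSet_Ioi fun t ht =>
      div_nonneg (hφ₀ t ((mem_Ici.1 hs).trans (mem_Ioi.1 ht).le)) (sq_nonneg t))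
    (Ioi_subset_Ioi hst).eventuallyLE

variable (hφm : MonotoneOn φ (Ici 1))

include hφ₀ hφi hφm

theorem le_mul_invSqTail_sub_invSqTail {r s : ℝ} (hr : 1 ≤ r) (hrs : r ≤ s) :
    φ r ≤ 4 * s * (invSqTail φ s - invSqTail φ (2 * s)) := by
  have hs : 1 ≤ s := hr.trans hrs
  have hs₀ : 0 < s := one_pos.trans_le hs
  have hss : s ≤ 2 * s := by linarith
  have hint : IntegrableOn (fun t => φ t / t ^ 2) (Ioi s) := hφi.mono_set (Ioi_subset_Ioi hs)
  have hlower : ∀ t ∈ Ioc s (2 * s), φ r / (2 * s) ^ 2 ≤ φ t / t ^ 2 := fun t ht => by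
    have ht₀ : 0 < t := hs₀.trans ht.1
    have ht₁ : 1 ≤ t := hs.trans ht.1.le
    exact div_le_div₀ (hφ₀ t ht₁) (hφm hr ht₁ (hrs.trans ht.1.le)) (by positivity)
      (pow_le_pow_left₀ ht₀.le ht.2 2)
  have hint_ge := setIntegral_ge_of_const_le_real measurableSet_Ioc measure_Ioc_lt_top.ne hlower
    (hint.mono_set Ioc_subset_Ioi_self)
  rw [Real.volume_real_Ioc_of_le hss, ← intervalIntegral.integral_of_le hss,
    ← intervalIntegral.integral_Ioi_sub_Ioi hint hss] at hint_ge
  calc φ r = 4 * s * (φ r / (2 * s) ^ 2 * (2 * s - s)) := by field_simp; ring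
    _ ≤ 4 * s * (invSqTail φ s - invSqTail φ (2 * s)) := by gcongr; exact hint_ge

theorem tendsto_div_atTop_zero_of_integrableOn_div_sq :
    Tendsto (fun s => φ s / s) atTop (𝓝 0) := by
  have htail : Tendsto (fun s => 4 * invSqTail φ s) atTop (𝓝 0) := by
    simpa using (tendsto_invSqTail φ).const_mul 4
  refine squeeze_zero' ?_ ?_ htail
  · filter_upwards [eventually_ge_atTop 1] with s hs
    exact div_nonneg (hφ₀ s hs) (by linarith)
  · filter_upwards [eventually_ge_atTop 1] with s hs
    have hs₀ : 0 < s := one_pos.trans_le hs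
    have htail₀ : 0 ≤ invSqTail φ (2 * s) := invSqTail_nonneg hφ₀ (by linarith)
    rw [div_le_iff₀ hs₀]
    calc φ s ≤ 4 * s * (invSqTail φ s - invSqTail φ (2 * s)) :=
          le_mul_invSqTail_sub_invSqTail hφ₀ hφi hφm hs le_rfl
      _ ≤ 4 * s * invSqTail φ s := by gcongr; linarith
      _ = 4 * invSqTail φ s * s := by ring

end InvSqTail

/-- Subadditivity up to an error `φ` depending on the sum of the indices, the hypothesis of the
de Bruijn–Erdős generalization of Fekete's lemma. As in `QuasiLinear`, only positive indices are
constrained. -/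
def AlmostSubadditive (φ : ℝ → ℝ) (a : ℕ → ℝ) : Prop :=
  ∀ m n : ℕ, 1 ≤ m → 1 ≤ n → a (m + n) ≤ a m + a n + φ ((m + n : ℕ) : ℝ)

namespace AlmostSubadditive

variable {φ : ℝ → ℝ} {a : ℕ → ℝ} (ha : AlmostSubadditive φ a) (hφ₀ : ∀ t, 1 ≤ t → 0 ≤ φ t)

include ha hφ₀ in
theorem apply_add_le_add_abs {m : ℕ} (hm : 1 ≤ m) (r : ℕ) :
    a (m + r) ≤ a m + |a r| + φ ((m + r : ℕ) : ℝ) := by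
  rcases r.eq_zero_or_pos with rfl | hr
  · have hφm : 0 ≤ φ m := hφ₀ m (by exact_mod_cast hm)
    rw [add_zero]
    linarith [abs_nonneg (a 0)]
  · linarith [ha m r hm hr, le_abs_self (a r)]

variable (hφi : IntegrableOn (fun t => φ t / t ^ 2) (Ioi 1)) (hφm : MonotoneOn φ (Ici 1))

include ha hφ₀ hφi hφm

theorem apply_mul_le_of_le_two_pow {n : ℕ} (hn : 1 ≤ n) (J : ℕ) :
    ∀ k : ℕ, 1 ≤ k → k ≤ 2 ^ J → a (k * n) ≤
      k * a n + 2 ^ J * (4 * n) * (invSqTail φ (2 * n) - invSqTail φ (2 ^ J * (2 * n))) := by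
  have hn' : (1 : ℝ) ≤ n := by exact_mod_cast hn
  induction J with
  | zero =>
    intro k hk hkJ
    obtain rfl : k = 1 := le_antisymm hkJ hk
    simp
  | succ J ih =>
    intro k hk hkJ
    set s : ℝ := 2 ^ J * (2 * n)
    have h2n : (1 : ℝ) ≤ 2 * n := by linarith
    have hs : 2 * (n : ℝ) ≤ s := le_mul_of_one_le_left (by linarith) (one_le_pow₀ one_le_two)
    have hs_two : (2 : ℝ) ^ (J + 1) * (2 * n) = 2 * s := by ring
    rw [hs_two]
    obtain rfl | hk₂ : k = 1 ∨ 2 ≤ k := by omega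
    · have htail : invSqTail φ (2 * s) ≤ invSqTail φ (2 * n) :=
        invSqTail_antitoneOn hφ₀ hφi h2n (by simp only [mem_Ici]; linarith) (by linarith)
      simpa using mul_nonneg (by positivity) (sub_nonneg.2 htail)
    · obtain ⟨p, q, hp, hq, rfl, hpJ, hqJ⟩ :
          ∃ p q, 1 ≤ p ∧ 1 ≤ q ∧ k = p + q ∧ p ≤ 2 ^ J ∧ q ≤ 2 ^ J := by
        rw [pow_succ] at hkJ
        exact ⟨k / 2, k - k / 2, by omega, by omega, by omega, by omega, by omega⟩
      have hsplit := ha (p * n) (q * n) (Nat.mul_pos hp hn) (Nat.mul_pos hq hn)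
      rw [← add_mul] at hsplit
      have hkn_one : (1 : ℝ) ≤ ((p + q) * n : ℕ) := by exact_mod_cast Nat.mul_pos hk hn
      have hkn_s : (((p + q) * n : ℕ) : ℝ) ≤ s := by
        have hkn : (p + q) * n ≤ 2 ^ J * (2 * n) := by
          simpa only [pow_succ, mul_assoc] using Nat.mul_le_mul_right n hkJ
        simp only [s]
        exact_mod_cast hkn
      calc a ((p + q) * n) ≤ a (p * n) + a (q * n) + φ ((p + q) * n : ℕ) := hsplit
        _ ≤ (p * a n + 2 ^ J * (4 * n) * (invSqTail φ (2 * n) - invSqTail φ s))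
            + (q * a n + 2 ^ J * (4 * n) * (invSqTail φ (2 * n) - invSqTail φ s))
            + 4 * s * (invSqTail φ s - invSqTail φ (2 * s)) := by
          gcongr
          exacts [ih p hp hpJ, ih q hq hqJ,
            le_mul_invSqTail_sub_invSqTail hφ₀ hφi hφm hkn_one hkn_s]
        _ = (p + q : ℕ) * a n
            + 2 ^ (J + 1) * (4 * n) * (invSqTail φ (2 * n) - invSqTail φ (2 * s)) := by
          push_cast; ring

theorem apply_mul_le {k n : ℕ} (hk : 1 ≤ k) (hn : 1 ≤ n) :
    a (k * n) ≤ k * (a n + 8 * n * invSqTail φ (2 * n)) := by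
  set J := Nat.log 2 k + 1
  have hn' : (1 : ℝ) ≤ n := by exact_mod_cast hn
  have hkJ : k ≤ 2 ^ J := (Nat.lt_pow_succ_log_self one_lt_two k).le
  have hJk : (2 : ℝ) ^ J ≤ 2 * k := by
    have hlog : 2 ^ J ≤ 2 * k := by
      rw [pow_succ']
      exact Nat.mul_le_mul_left 2 (Nat.pow_log_le_self 2 (by omega))
    exact_mod_cast hlog
  have hJn : (1 : ℝ) ≤ 2 ^ J * (2 * n) :=
    one_le_mul_of_one_le_of_one_le (one_le_pow₀ one_le_two) (by linarith)
  have htail : 0 ≤ invSqTail φ (2 * n) := invSqTail_nonneg hφ₀ (by linarith)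
  calc a (k * n)
      ≤ k * a n + 2 ^ J * (4 * n) * (invSqTail φ (2 * n) - invSqTail φ (2 ^ J * (2 * n))) :=
        ha.apply_mul_le_of_le_two_pow hφ₀ hφi hφm hn J k hk hkJ
    _ ≤ k * a n + 2 ^ J * (4 * n) * invSqTail φ (2 * n) := by
        gcongr
        exact sub_le_self _ (invSqTail_nonneg hφ₀ hJn)
    _ ≤ k * a n + 2 * k * (4 * n) * invSqTail φ (2 * n) := by gcongr
    _ = k * (a n + 8 * n * invSqTail φ (2 * n)) := by ring

theorem eventually_div_lt_of_div_add_invSqTail_lt {L : ℝ} {n : ℕ} (hn : 1 ≤ n)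
    (hL : a n / n + 8 * invSqTail φ (2 * n) < L) : ∀ᶠ p : ℕ in atTop, a p / p < L := by
  have hn₀ : (n : ℝ) ≠ 0 := Nat.cast_ne_zero.2 (by omega)
  refine .atTop_of_arithmetic (Nat.one_le_iff_ne_zero.1 hn) fun r _ => ?_
  set c := a n + 8 * n * invSqTail φ (2 * n)
  have hc : c / n < L := by
    convert hL using 1
    simp only [c]
    field_simp
  have hmain : Tendsto (fun k : ℕ => (|a r| + c * k) / (r + n * k)) atTop (𝓝 (c / n)) :=
    tendsto_add_mul_div_add_mul_atTop_nhds _ _ _ hn₀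
  have herror : Tendsto (fun k : ℕ => φ (n * k + r : ℕ) / (n * k + r : ℕ)) atTop (𝓝 0) :=
    (tendsto_div_atTop_zero_of_integrableOn_div_sq hφ₀ hφi hφm).comp
      (tendsto_natCast_atTop_atTop.comp
        (tendsto_atTop_mono (fun k => Nat.le_add_right (n * k) r) (tendsto_id.const_mul_atTop' hn)))
  have hlim := hmain.add herror
  rw [add_zero] at hlim
  filter_upwards [hlim.eventually_lt_const hc, eventually_ge_atTop 1] with k hkL hk
  have hmul : a (n * k) ≤ c * k := by
    rw [mul_comm n, mul_comm c]
    exact ha.apply_mul_le hφ₀ hφi hφm hk hn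
  have hadd := ha.apply_add_le_add_abs hφ₀ (Nat.mul_pos hn hk) r
  calc a (n * k + r) / (n * k + r : ℕ)
      ≤ (|a r| + c * k + φ (n * k + r : ℕ)) / (n * k + r : ℕ) := by gcongr; linarith
    _ = (|a r| + c * k) / (r + n * k) + φ (n * k + r : ℕ) / (n * k + r : ℕ) := by
        rw [add_div]; push_cast; rw [add_comm (r : ℝ)]
    _ < L := hkL

theorem exists_tendsto_div (hbdd : IsBoundedUnder (· ≥ ·) atTop fun n : ℕ => a n / n) :
    ∃ L : ℝ, Tendsto (fun n : ℕ => a n / n) atTop (𝓝 L) := by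
  have hdiv_lt {L : ℝ} {n : ℕ} := ha.eventually_div_lt_of_div_add_invSqTail_lt hφ₀ hφi hφm
    (L := L) (n := n)
  have habove : IsBoundedUnder (· ≤ ·) atTop fun n : ℕ => a n / n :=
    isBoundedUnder_of_eventually_le ((hdiv_lt le_rfl (lt_add_one _)).mono fun _ => le_of_lt)
  have htail : Tendsto (fun n : ℕ => 8 * invSqTail φ (2 * n)) atTop (𝓝 0) := by
    simpa using ((tendsto_invSqTail φ).comp
      (tendsto_natCast_atTop_atTop.const_mul_atTop two_pos)).const_mul 8
  refine tendsto_of_no_upcrossings dense_univ ?_ habove hbdd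
  rintro x - y - hxy ⟨hlt, hgt⟩
  obtain ⟨n, hnx, hntail, hn⟩ := (hlt.and_eventually
    ((htail.eventually_lt_const (sub_pos.2 hxy)).and (eventually_ge_atTop 1))).exists
  exact hgt ((hdiv_lt hn (by linarith)).mono fun _ => not_lt_of_gt)

end AlmostSubadditive

namespace IsPseudoMetric

variable {Γ : Type*} {d : Γ → Γ → ℝ} (hd : IsPseudoMetric d)

include hd

theorem nonneg (x y : Γ) : 0 ≤ d x y := by
  obtain ⟨hself, hsymm, htri⟩ := hd
  linarith [htri x y x, hself x, hsymm x y]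

theorem triangle4_right (x x' y y' : Γ) : d x y ≤ d x x' + d x' y' + d y y' := by
  obtain ⟨-, hsymm, htri⟩ := hd
  linarith [htri x x' y, htri x' y' y, hsymm y y']

theorem almostSubadditive [Add Γ]
    (hadd : ∀ x x' y y' : Γ, d (x + x') (y + y') ≤ d x y + d x' y') {φ₁ φ₂ : ℝ → ℝ} {γ₁ γ₂ : ℕ → Γ}
    (hγ₁ : ∀ m n : ℕ, 1 ≤ m → 1 ≤ n → d (γ₁ (m + n)) (γ₁ m + γ₁ n) ≤ φ₁ (m + n : ℕ))
    (hγ₂ : ∀ m n : ℕ, 1 ≤ m → 1 ≤ n → d (γ₂ (m + n)) (γ₂ m + γ₂ n) ≤ φ₂ (m + n : ℕ)) :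
    AlmostSubadditive (φ₁ + φ₂) fun n => d (γ₁ n) (γ₂ n) := fun m n hm hn =>
  calc d (γ₁ (m + n)) (γ₂ (m + n))
      ≤ d (γ₁ (m + n)) (γ₁ m + γ₁ n) + d (γ₁ m + γ₁ n) (γ₂ m + γ₂ n)
        + d (γ₂ (m + n)) (γ₂ m + γ₂ n) := hd.triangle4_right _ _ _ _
    _ ≤ φ₁ (m + n : ℕ) + (d (γ₁ m) (γ₂ m) + d (γ₁ n) (γ₂ n)) + φ₂ (m + n : ℕ) :=
        add_le_add_three (hγ₁ m n hm hn) (hadd _ _ _ _) (hγ₂ m n hm hn)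
    _ = d (γ₁ m) (γ₂ m) + d (γ₁ n) (γ₂ n) + (φ₁ + φ₂) (m + n : ℕ) := by
        rw [Pi.add_apply]; ring

end IsPseudoMetric

theorem IsMetricAbelianMonoid.add_add_le {Γ : Type*} [AddCommMonoid Γ] {d : Γ → Γ → ℝ}
    (h : IsMetricAbelianMonoid d) (x x' y y' : Γ) : d (x + x') (y + y') ≤ d x y + d x' y' := by
  obtain ⟨⟨-, -, htri⟩, hlip⟩ := h
  calc d (x + x') (y + y') ≤ d (x' + x) (x' + y) + d (y + x') (y + y') := by
        simpa only [add_comm] using htri (x + x') (y + x') (y + y')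
    _ ≤ d x y + d x' y' := add_le_add (hlip x' x y) (hlip y x' y')

theorem dista_exists_general {Γ : Type*} [Add Γ] {d : Γ → Γ → ℝ} (hd : IsPseudoMetric d)
    (hadd : ∀ x x' y y' : Γ, d (x + x') (y + y') ≤ d x y + d x' y') {φ₁ φ₂ : ℝ → ℝ} {γ₁ γ₂ : ℕ → Γ}
    (hφ₁₀ : ∀ t, 1 ≤ t → 0 ≤ φ₁ t) (hφ₂₀ : ∀ t, 1 ≤ t → 0 ≤ φ₂ t)
    (hφ₁m : MonotoneOn φ₁ (Ici 1)) (hφ₂m : MonotoneOn φ₂ (Ici 1))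
    (hφ₁i : IntegrableOn (fun t => φ₁ t / t ^ 2) (Ioi 1))
    (hφ₂i : IntegrableOn (fun t => φ₂ t / t ^ 2) (Ioi 1))
    (hγ₁ : ∀ m n : ℕ, 1 ≤ m → 1 ≤ n → d (γ₁ (m + n)) (γ₁ m + γ₁ n) ≤ φ₁ (m + n : ℕ))
    (hγ₂ : ∀ m n : ℕ, 1 ≤ m → 1 ≤ n → d (γ₂ (m + n)) (γ₂ m + γ₂ n) ≤ φ₂ (m + n : ℕ)) :
    ∃ L : ℝ, Tendsto (fun n : ℕ => d (γ₁ n) (γ₂ n) / n) atTop (𝓝 L) := by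
  have hφi : IntegrableOn (fun t => (φ₁ + φ₂) t / t ^ 2) (Ioi 1) := by
    simp only [Pi.add_apply, add_div]
    exact hφ₁i.add hφ₂i
  exact (hd.almostSubadditive hadd hγ₁ hγ₂).exists_tendsto_div
    (fun t ht => add_nonneg (hφ₁₀ t ht) (hφ₂₀ t ht)) hφi (hφ₁m.add hφ₂m)
    (isBoundedUnder_of ⟨0, fun n => div_nonneg (hd.nonneg _ _) n.cast_nonneg⟩)

/-- For quasi-linear sequences `γ₁, γ₂` in a metric Abelian monoid, the
asymptotic distance `lim_{n→∞} d (γ₁ n) (γ₂ n) / n` exists and is finite. -/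
theorem dista_exists {Γ : Type*} [AddCommMonoid Γ] (d : Γ → Γ → ℝ)
    (h : IsMetricAbelianMonoid d)
    (φ₁ φ₂ : ℝ → ℝ) (hφ₁ : Admissible φ₁) (hφ₂ : Admissible φ₂)
    (γ₁ γ₂ : ℕ → Γ)
    (hγ₁ : QuasiLinear d φ₁ γ₁) (hγ₂ : QuasiLinear d φ₂ γ₂) :
    ∃ L : ℝ, Filter.Tendsto (fun n : ℕ => d (γ₁ n) (γ₂ n) / n)
      Filter.atTop (nhds L) := by
  obtain ⟨_, hφ₁₀, hφ₁m, -, hφ₁i, -⟩ := hφ₁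
  obtain ⟨_, hφ₂₀, hφ₂m, -, hφ₂i, -⟩ := hφ₂
  exact dista_exists_general h.1 h.add_add_le hφ₁₀ hφ₂₀ hφ₁m hφ₂m (hφ₁i 1 le_rfl) (hφ₂i 1 le_rfl)
    hγ₁.2 hγ₂.2
end

section
/- Let (Γ,+,d) be a metric Abelian monoid, φ an admissible function, and γ̄ a quasi-linear sequence with defect bounded by φ. Then for all m,n ∈ ℕ with m,n ≥ 1, d(γ(m·n), m•γ(n)) ≤ 8·m·n·∫_n^{2mn} φ(t)/t² dt. -/
open MeasureTheory Filter

/-!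
Fix `n` and put `a m = d (γ (m n)) (m • γ n)`. Quasi-linearity and the triangle inequality make `a`
subadditive up to the error `φ (n m)` at `m`. Split `m = p + q` into two nearly equal halves and
induct: the error at `m` is paid for by the part over `[m, 2m]` of the integral of `φ (n t) / t²`,
which the bound for `a q` leaves untouched because `2q ≤ m`. Rescaling the integration variable by
`n` gives the estimate for `γ`.
-/

section IntegralDivSq

theorem integral_comp_mul_left_div_sq (φ : ℝ → ℝ) (x y : ℝ) {c : ℝ} (hc : c ≠ 0) :
    ∫ t in x..y, φ (c * t) / t ^ 2 = c * ∫ t in (c * x)..(c * y), φ t / t ^ 2 := by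
  rw [← intervalIntegral.mul_integral_comp_mul_left, ← intervalIntegral.integral_const_mul,
    ← intervalIntegral.integral_const_mul]
  refine intervalIntegral.integral_congr fun t _ => ?_
  field_simp

variable {φ : ℝ → ℝ} {s x y : ℝ}

theorem integral_inv_sq (h0 : (0 : ℝ) ∉ Set.uIcc x y) :
    ∫ t in x..y, (t ^ 2)⁻¹ = x⁻¹ - y⁻¹ := by
  calc ∫ t in x..y, (t ^ 2)⁻¹ = ∫ t in x..y, t ^ (-2 : ℤ) := by norm_cast
    _ = x⁻¹ - y⁻¹ := by
      rw [integral_zpow (.inr ⟨by norm_num, h0⟩), show (-2 : ℤ) + 1 = -1 from rfl, zpow_neg_one,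
        zpow_neg_one]
      push_cast
      ring

theorem intervalIntegrable_div_sq (hφ : MonotoneOn φ (Set.uIcc x y))
    (h0 : (0 : ℝ) ∉ Set.uIcc x y) :
    IntervalIntegrable (fun t => φ t / t ^ 2) volume x y := by
  simp only [div_eq_mul_inv]
  exact hφ.intervalIntegrable.mul_continuousOn <|
    (continuousOn_id.pow 2).inv₀ fun t ht => pow_ne_zero 2 (ne_of_mem_of_not_mem ht h0)

theorem mul_inv_sub_inv_le_integral_div_sq_s8 (hx : 0 < x) (hxy : x ≤ y)
    (hφ : MonotoneOn φ (Set.Icc x y)) :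
    φ x * (x⁻¹ - y⁻¹) ≤ ∫ t in x..y, φ t / t ^ 2 := by
  have h0 : (0 : ℝ) ∉ Set.uIcc x y := Set.notMem_uIcc_of_lt hx (hx.trans_le hxy)
  calc φ x * (x⁻¹ - y⁻¹) = ∫ t in x..y, φ x / t ^ 2 := by
        simp only [div_eq_mul_inv, intervalIntegral.integral_const_mul, integral_inv_sq h0]
    _ ≤ ∫ t in x..y, φ t / t ^ 2 := by
        refine intervalIntegral.integral_mono_on hxy
          (intervalIntegrable_div_sq monotoneOn_const h0)
          (intervalIntegrable_div_sq (by rwa [Set.uIcc_of_le hxy]) h0) fun t ht => ?_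
        gcongr
        exact hφ (Set.left_mem_Icc.2 hxy) ht ht.1

theorem integral_div_sq_add_mul_inv_sub_inv_le (hs : 0 < s) (hsx : s ≤ x) (hxy : x ≤ y)
    (hφ : MonotoneOn φ (Set.Icc s y)) :
    (∫ t in s..x, φ t / t ^ 2) + φ x * (x⁻¹ - y⁻¹) ≤ ∫ t in s..y, φ t / t ^ 2 := by
  have hx : 0 < x := hs.trans_le hsx
  have hint_sx : IntervalIntegrable (fun t => φ t / t ^ 2) volume s x :=
    intervalIntegrable_div_sq
      (hφ.mono (Set.uIcc_of_le hsx ▸ Set.Icc_subset_Icc_right hxy)) (Set.notMem_uIcc_of_lt hs hx)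
  have hφ_xy : MonotoneOn φ (Set.Icc x y) := hφ.mono (Set.Icc_subset_Icc_left hsx)
  have hint_xy : IntervalIntegrable (fun t => φ t / t ^ 2) volume x y :=
    intervalIntegrable_div_sq (by rwa [Set.uIcc_of_le hxy])
      (Set.notMem_uIcc_of_lt hx (hx.trans_le hxy))
  rw [← intervalIntegral.integral_add_adjacent_intervals hint_sx hint_xy]
  gcongr
  exact mul_inv_sub_inv_le_integral_div_sq_s8 hx hxy hφ_xy

theorem integral_div_sq_mono (hs : 0 < s) (hsx : s ≤ x) (hxy : x ≤ y)
    (hφ : MonotoneOn φ (Set.Icc s y)) (hφs : 0 ≤ φ s) :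
    ∫ t in s..x, φ t / t ^ 2 ≤ ∫ t in s..y, φ t / t ^ 2 := by
  have hφx : 0 ≤ φ x :=
    hφs.trans (hφ (Set.left_mem_Icc.2 (hsx.trans hxy)) ⟨hsx, hxy⟩ hsx)
  have hinv : y⁻¹ ≤ x⁻¹ := inv_anti₀ (hs.trans_le hsx) hxy
  exact (le_add_of_nonneg_right (mul_nonneg hφx (sub_nonneg.2 hinv))).trans
    (integral_div_sq_add_mul_inv_sub_inv_le hs hsx hxy hφ)

theorem mul_integral_div_sq_add_le (hs : 0 < s) (hsx : s ≤ x) (hxy : x ≤ y) (hyx : y ≤ 2 * x)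
    (hφ : MonotoneOn φ (Set.Icc s (2 * y))) (hφs : 0 ≤ φ s) :
    4 * x * (∫ t in s..x, φ t / t ^ 2) + φ y ≤ 4 * x * ∫ t in s..2 * y, φ t / t ^ 2 := by
  have hx : 0 < x := hs.trans_le hsx
  have hy : 0 < y := hx.trans_le hxy
  have hsy : s ≤ y := hsx.trans hxy
  have hy2 : y ≤ 2 * y := by linarith
  have hφy : 0 ≤ φ y := hφs.trans (hφ (Set.left_mem_Icc.2 (hsy.trans hy2)) ⟨hsy, hy2⟩ hsy)
  have hinv : y⁻¹ - (2 * y)⁻¹ = (2 * y)⁻¹ := by field_simp; norm_num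
  have hφ_le : φ y ≤ 4 * x * (φ y * (2 * y)⁻¹) :=
    calc φ y ≤ φ y * (4 * x / (2 * y)) :=
          le_mul_of_one_le_right hφy ((one_le_div (by positivity)).2 (by linarith))
      _ = 4 * x * (φ y * (2 * y)⁻¹) := by ring
  calc 4 * x * (∫ t in s..x, φ t / t ^ 2) + φ y
      ≤ 4 * x * (∫ t in s..y, φ t / t ^ 2) + 4 * x * (φ y * (2 * y)⁻¹) := by
        gcongr 4 * x * ?_ + ?_
        exact integral_div_sq_mono hs hsx hxy (hφ.mono (Set.Icc_subset_Icc_right hy2)) hφs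
    _ = 4 * x * ((∫ t in s..y, φ t / t ^ 2) + φ y * (y⁻¹ - (2 * y)⁻¹)) := by rw [hinv]; ring
    _ ≤ 4 * x * ∫ t in s..2 * y, φ t / t ^ 2 := by
        gcongr
        exact integral_div_sq_add_mul_inv_sub_inv_le hs hsy hy2 hφ

end IntegralDivSq

theorem le_mul_integral_of_add_le_add {a : ℕ → ℝ} {φ : ℝ → ℝ} (hφ : MonotoneOn φ (Set.Ici 1))
    (hφ1 : 0 ≤ φ 1) (ha1 : a 1 ≤ 0)
    (ha : ∀ p q : ℕ, 1 ≤ p → 1 ≤ q → a (p + q) ≤ a p + a q + φ (p + q : ℕ))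
    {m : ℕ} (hm : 1 ≤ m) :
    a m ≤ 8 * m * ∫ t in (1 : ℝ)..2 * m, φ t / t ^ 2 := by
  set I : ℝ → ℝ := fun x => ∫ t in (1 : ℝ)..x, φ t / t ^ 2
  have hI {x y : ℝ} (hx : 1 ≤ x) (hxy : x ≤ y) : I x ≤ I y :=
    integral_div_sq_mono one_pos hx hxy (hφ.mono Set.Icc_subset_Ici_self) hφ1
  change a m ≤ 8 * m * I (2 * m)
  induction m using Nat.strong_induction_on with
  | _ m ih =>
  have hm1 : (1 : ℝ) ≤ m := mod_cast hm
  obtain rfl | hm2 : m = 1 ∨ 2 ≤ m := by lia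
  · have hI_nonneg : 0 ≤ I (2 * (1 : ℕ)) :=
      intervalIntegral.integral_same.symm.trans_le (hI le_rfl (by linarith))
    exact ha1.trans (by positivity)
  obtain ⟨p, q, hpq, hp, hq, hqm, hmq⟩ :
      ∃ p q : ℕ, p + q = m ∧ 1 ≤ p ∧ 1 ≤ q ∧ 2 * q ≤ m ∧ m ≤ 2 * (2 * q) :=
    ⟨m - m / 2, m / 2, by lia, by lia, by lia, by lia, by lia⟩
  have hp1 : (1 : ℝ) ≤ p := mod_cast hp
  have hpm : (p : ℝ) ≤ m := mod_cast hpq ▸ Nat.le_add_right p q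
  have hq1 : (1 : ℝ) ≤ q := mod_cast hq
  have herror : 4 * (2 * q) * I (2 * q) + φ m ≤ 4 * (2 * q) * I (2 * m) :=
    mul_integral_div_sq_add_le one_pos (by linarith) (mod_cast hqm) (mod_cast hmq)
      (hφ.mono Set.Icc_subset_Ici_self) hφ1
  calc a m ≤ a p + a q + φ m := hpq ▸ ha p q hp hq
    _ ≤ 8 * p * I (2 * p) + 8 * q * I (2 * q) + φ m := by
        gcongr
        · exact ih p (by lia) hp
        · exact ih q (by lia) hq
    _ = 8 * p * I (2 * p) + (4 * (2 * q) * I (2 * q) + φ m) := by ring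
    _ ≤ 8 * p * I (2 * m) + 4 * (2 * q) * I (2 * m) := by
        gcongr
        exact hI (by linarith) (by linarith)
    _ = 8 * m * I (2 * m) := by rw [← hpq]; push_cast; ring

section MetricAbelianMonoid

variable {Γ : Type*} [AddCommMonoid Γ] {d : Γ → Γ → ℝ}

theorem IsMetricAbelianMonoid.dist_add_add_le (h : IsMetricAbelianMonoid d) (x y x' y' : Γ) :
    d (x + y) (x' + y') ≤ d x x' + d y y' := by
  obtain ⟨⟨-, -, htri⟩, hlip⟩ := h
  calc d (x + y) (x' + y') ≤ d (x + y) (x' + y) + d (x' + y) (x' + y') := htri _ _ _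
    _ ≤ d x x' + d y y' := by
        gcongr
        · simpa only [add_comm _ y] using hlip y x x'
        · exact hlip x' y y'

theorem QuasiLinear.dist_nsmul_add_le {φ : ℝ → ℝ} {γ : ℕ → Γ} (h : IsMetricAbelianMonoid d)
    (hγ : QuasiLinear d φ γ) {p q n : ℕ} (hp : 1 ≤ p) (hq : 1 ≤ q) (hn : 1 ≤ n) :
    d (γ ((p + q) * n)) ((p + q) • γ n) ≤
      d (γ (p * n)) (p • γ n) + d (γ (q * n)) (q • γ n) + φ (n * (p + q : ℕ)) := by
  have hdefect : d (γ ((p + q) * n)) (γ (p * n) + γ (q * n)) ≤ φ (n * (p + q : ℕ)) := by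
    have hdefect_mul := hγ.2 (p * n) (q * n) (Nat.mul_pos hp hn) (Nat.mul_pos hq hn)
    rwa [← add_mul, Nat.cast_mul, mul_comm ((p + q : ℕ) : ℝ)] at hdefect_mul
  calc d (γ ((p + q) * n)) ((p + q) • γ n)
      ≤ d (γ ((p + q) * n)) (γ (p * n) + γ (q * n))
        + d (γ (p * n) + γ (q * n)) (p • γ n + q • γ n) := add_nsmul (γ n) p q ▸ h.1.2.2 _ _ _
    _ ≤ φ (n * (p + q : ℕ)) + (d (γ (p * n)) (p • γ n) + d (γ (q * n)) (q • γ n)) :=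
        add_le_add hdefect (h.dist_add_add_le _ _ _ _)
    _ = _ := add_comm _ _

theorem quasilinear_quasihomogeneous_general (h : IsMetricAbelianMonoid d)
    {φ : ℝ → ℝ} (hφ : MonotoneOn φ (Set.Ici 1)) (hφ1 : 0 ≤ φ 1)
    {γ : ℕ → Γ} (hγ : QuasiLinear d φ γ) {m n : ℕ} (hm : 1 ≤ m) (hn : 1 ≤ n) :
    d (γ (m * n)) (m • γ n) ≤
      8 * (m : ℝ) * (n : ℝ) * ∫ t in (n : ℝ)..(2 * (m : ℝ) * (n : ℝ)), φ t / t ^ 2 := by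
  have hn1 : (1 : ℝ) ≤ n := mod_cast hn
  have hψ : MonotoneOn (fun t => φ (n * t)) (Set.Ici 1) := fun x hx y hy hxy =>
    hφ (one_le_mul_of_one_le_of_one_le hn1 hx) (one_le_mul_of_one_le_of_one_le hn1 hy) (by gcongr)
  have hψ1 : 0 ≤ φ (n * 1) := by
    rw [mul_one]
    exact hφ1.trans (hφ Set.self_mem_Ici hn1 hn1)
  have ha1 : d (γ (1 * n)) (1 • γ n) ≤ 0 := by rw [one_mul, one_nsmul, h.1.1]
  calc d (γ (m * n)) (m • γ n)
      ≤ 8 * m * ∫ t in (1 : ℝ)..2 * m, φ (n * t) / t ^ 2 :=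
        le_mul_integral_of_add_le_add (a := fun k => d (γ (k * n)) (k • γ n)) hψ hψ1 ha1
          (fun p q hp hq => hγ.dist_nsmul_add_le h hp hq hn) hm
    _ = 8 * m * n * ∫ t in (n : ℝ)..2 * m * n, φ t / t ^ 2 := by
        rw [integral_comp_mul_left_div_sq φ _ _ (by positivity), mul_one, mul_comm (n : ℝ) (2 * m),
          mul_assoc (8 * (m : ℝ))]

end MetricAbelianMonoid

/-- Quasi-homogeneity of quasi-linear sequences:
`d (γ (m*n)) (m • γ n) ≤ 8 m n ∫_n^{2mn} φ(t)/t² dt`. -/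
theorem quasilinear_quasihomogeneous {Γ : Type*} [AddCommMonoid Γ]
    (d : Γ → Γ → ℝ) (h : IsMetricAbelianMonoid d)
    (φ : ℝ → ℝ) (hφ : Admissible φ)
    (γ : ℕ → Γ) (hγ : QuasiLinear d φ γ)
    (m n : ℕ) (hm : 1 ≤ m) (hn : 1 ≤ n) :
    d (γ (m * n)) (m • γ n) ≤
      8 * (m : ℝ) * (n : ℝ) * ∫ t in (n : ℝ)..(2 * (m : ℝ) * (n : ℝ)), φ t / t ^ 2 := by
  obtain ⟨_, hnonneg, hmono, -⟩ := hφ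
  exact quasilinear_quasihomogeneous_general h hmono (hnonneg 1 le_rfl) hγ hm hn
end

section
/- Let (Γ,+,d) be a metric Abelian monoid. For any γ₁,γ₂ ∈ Γ, the limit 𝛿(γ₁,γ₂) := lim_{n→∞} (1/n)·d(n•γ₁, n•γ₂) exists, and 𝛿(γ₁,γ₂) ≤ d(γ₁,γ₂); in other words, the map sending γ ∈ Γ to its associated linear sequence (n•γ)_{n∈ℕ}, with the asymptotic distance on linear sequences, is a contraction. -/
open MeasureTheory Filter

/-! If moving from `x` to `y` is never made costlier by adding a common term on either side, then
summands can be exchanged one at a time, so `d (n • x) (n • y)` is subadditive in `n` and Fekete's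
lemma gives the limit as an infimum, which is at most the term at `n = 1`. Without symmetry `d` may
take negative values; the lower bound Fekete's lemma requires then comes from the return cost
`d (n • y) (n • x)`, which grows at most linearly. -/

theorem subadditive_apply_nsmul {M : Type*} [AddMonoid M] {f : M → ℝ}
    (hf : ∀ a b, f (a + b) ≤ f a + f b) (x : M) : Subadditive fun n : ℕ => f (n • x) := by
  intro m n
  simpa only [add_nsmul] using hf (m • x) (n • x)

theorem bddBelow_range_div_of_subadditive_of_neg_le {u v : ℕ → ℝ} (hv : Subadditive v)
    (huv : ∀ n, -v n ≤ u n) : BddBelow (Set.range fun n => u n / n) := by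
  refine ⟨-|v 1|, ?_⟩
  rintro _ ⟨_ | n, rfl⟩
  · simp
  · have hlinear : v (n + 1) ≤ (n + 1) * v 1 := by
      simpa [add_mul] using hv.apply_mul_add_le n 1 1
    have hpos : (0 : ℝ) < n + 1 := n.cast_add_one_pos
    push_cast
    rw [le_div_iff₀ hpos]
    calc -|v 1| * (n + 1) ≤ -v 1 * (n + 1) := by gcongr; exact le_abs_self _
      _ = -((n + 1) * v 1) := by ring
      _ ≤ -v (n + 1) := neg_le_neg hlinear
      _ ≤ u (n + 1) := huv (n + 1)

theorem neg_swap_le_of_triangle {X : Type*} {d : X → X → ℝ}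
    (htri : ∀ x y z, d x z ≤ d x y + d y z) (x y : X) : -d y x ≤ d x y := by
  have hself : d x x ≤ d x x + d x x := htri x x x
  linarith [htri x y x]

theorem dist_add_add_le_of_triangle {M : Type*} [Add M] {d : M → M → ℝ}
    (htri : ∀ x y z, d x z ≤ d x y + d y z)
    (hleft : ∀ a b c, d (a + b) (a + c) ≤ d b c)
    (hright : ∀ a b c, d (b + a) (c + a) ≤ d b c) (a b a' b' : M) :
    d (a + b) (a' + b') ≤ d a a' + d b b' :=
  calc d (a + b) (a' + b') ≤ d (a + b) (a' + b) + d (a' + b) (a' + b') := htri _ _ _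
    _ ≤ d a a' + d b b' := add_le_add (hright b a a') (hleft a' b b')

theorem linear_sequence_contraction_general {M : Type*} [AddMonoid M] {d : M → M → ℝ}
    (htri : ∀ x y z, d x z ≤ d x y + d y z)
    (hleft : ∀ a b c, d (a + b) (a + c) ≤ d b c)
    (hright : ∀ a b c, d (b + a) (c + a) ≤ d b c) (x y : M) :
    ∃ L : ℝ, Tendsto (fun n : ℕ => d (n • x) (n • y) / n) atTop (nhds L) ∧ L ≤ d x y := by
  have hsub (a b : M) : Subadditive fun n : ℕ => d (n • a) (n • b) :=
    subadditive_apply_nsmul (f := Function.uncurry d)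
      (fun p q => dist_add_add_le_of_triangle htri hleft hright p.1 q.1 p.2 q.2) (a, b)
  have hbdd : BddBelow (Set.range fun n : ℕ => d (n • x) (n • y) / n) :=
    bddBelow_range_div_of_subadditive_of_neg_le (hsub y x)
      fun n => neg_swap_le_of_triangle htri (n • x) (n • y)
  have hlim : (hsub x y).lim ≤ d x y := by
    simpa using (hsub x y).lim_le_div hbdd one_ne_zero
  exact ⟨(hsub x y).lim, (hsub x y).tendsto_lim hbdd, hlim⟩

/-- The map sending `γ` to its linear sequence `(n • γ)` is a contraction:
the asymptotic distance `lim_{n→∞} d (n • γ₁) (n • γ₂) / n` exists and is at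
most `d γ₁ γ₂`. -/
theorem linear_sequence_contraction {Γ : Type*} [AddCommMonoid Γ]
    (d : Γ → Γ → ℝ) (h : IsMetricAbelianMonoid d) (γ₁ γ₂ : Γ) :
    ∃ L : ℝ, Filter.Tendsto (fun n : ℕ => d (n • γ₁) (n • γ₂) / n)
        Filter.atTop (nhds L) ∧ L ≤ d γ₁ γ₂ := by
  exact linear_sequence_contraction_general h.1.2.2 h.2
    (fun a b c => by simpa only [add_comm _ a] using h.2 a b c) γ₁ γ₂
end

section
/- Let (Γ,+,d) be a metric Abelian monoid, φ an admissible function, C ≥ 0, and γ̄ a quasi-linear sequence with defect bounded by C·φ. Then for every m ∈ ℕ with m ≥ 1, the m-fold elementwise sum of γ̄ is asymptotically equivalent to the sequence k ↦ γ(m·k): that is, lim_{k→∞} (1/k)·d(γ(m·k), m•γ(k)) = 0. -/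
/-!
Splitting off one `γ k` at a time and absorbing the remaining terms by left translation bounds
`d (γ (m * k)) (m • γ k)` by a sum of `m - 1` defects, evaluated at `2 * k, …, m * k`. For fixed
`m` this is `o(k)` as soon as the defect grows sublinearly. An admissible `φ` does: monotonicity
gives `φ s / s = ∫_s^∞ φ s / t² dt ≤ ∫_s^∞ φ t / t² dt`, a tail of a convergent integral.
-/

open MeasureTheory Filter

open Asymptotics Topology

theorem div_le_integral_Ioi_div_sq_of_monotoneOn {f : ℝ → ℝ} {s : ℝ} (hs : 0 < s)
    (hf : MonotoneOn f (Set.Ici s)) (hint : IntegrableOn (fun t => f t / t ^ 2) (Set.Ioi s)) :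
    f s / s ≤ ∫ t in Set.Ioi s, f t / t ^ 2 := by
  have integral_rpow : ∫ t in Set.Ioi s, t ^ (-2 : ℝ) = s⁻¹ := by
    rw [integral_Ioi_rpow_of_lt (by norm_num) hs, show (-2 + 1 : ℝ) = -1 by norm_num,
      Real.rpow_neg_one, neg_div_neg_eq, div_one]
  calc f s / s = ∫ t in Set.Ioi s, f s * t ^ (-2 : ℝ) := by
        rw [integral_const_mul, integral_rpow, div_eq_mul_inv]
    _ ≤ ∫ t in Set.Ioi s, f t / t ^ 2 := by
        refine setIntegral_mono_on
          ((integrableOn_Ioi_rpow_of_lt (by norm_num) hs).const_mul (f s)) hint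
          measurableSet_Ioi fun t ht => ?_
        have hst : s ≤ t := le_of_lt ht
        rw [Real.rpow_neg (hs.le.trans hst), Real.rpow_two, ← div_eq_mul_inv]
        gcongr
        exact hf Set.self_mem_Ici hst hst

theorem isLittleO_id_of_monotoneOn_of_integrableOn_div_sq {f : ℝ → ℝ} {a : ℝ}
    (hf : MonotoneOn f (Set.Ici a)) (hint : IntegrableOn (fun t => f t / t ^ 2) (Set.Ioi a)) :
    f =o[atTop] (id : ℝ → ℝ) := by
  have lower : Tendsto (fun s => f a / s) atTop (𝓝 0) := tendsto_id.const_div_atTop (f a)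
  have upper : Tendsto (fun s => ∫ t in Set.Ioi s, f t / t ^ 2) atTop (𝓝 0) :=
    tendsto_integral_Ioi_zero tendsto_id
  refine (isLittleO_iff_tendsto' ?_).2
    (tendsto_of_tendsto_of_tendsto_of_le_of_le' lower upper ?_ ?_)
  · filter_upwards [eventually_ne_atTop 0] with s hs h0 using absurd h0 hs
  · filter_upwards [eventually_ge_atTop a, eventually_gt_atTop 0] with s has hs
    exact div_le_div_of_nonneg_right (hf Set.self_mem_Ici has has) hs.le
  · filter_upwards [eventually_ge_atTop a, eventually_gt_atTop 0] with s has hs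
    exact div_le_integral_Ioi_div_sq_of_monotoneOn hs (hf.mono (Set.Ici_subset_Ici.2 has))
      (hint.mono_set (Set.Ioi_subset_Ioi has))

theorem Admissible.isLittleO_id {φ : ℝ → ℝ} (hφ : Admissible φ) : φ =o[atTop] (id : ℝ → ℝ) := by
  obtain ⟨_, -, hmono, -, hint, -⟩ := hφ
  exact isLittleO_id_of_monotoneOn_of_integrableOn_div_sq hmono (hint 1 le_rfl)

theorem isLittleO_natCast_comp_mul_left {E : Type*} [Norm E] {u : ℕ → E}
    (hu : u =o[atTop] (fun n : ℕ => (n : ℝ))) {c : ℕ} (hc : 0 < c) :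
    (fun k => u (c * k)) =o[atTop] (fun k : ℕ => (k : ℝ)) := by
  have hlinear : (fun k : ℕ => ((c * k : ℕ) : ℝ)) =O[atTop] (fun k : ℕ => (k : ℝ)) := by
    simpa only [Nat.cast_mul] using (isBigO_refl _ _).const_mul_left (c : ℝ)
  exact (hu.comp_tendsto (tendsto_id.const_mul_atTop' hc)).trans_isBigO hlinear

theorem IsPseudoMetric.nonneg_s12 {Γ : Type*} {d : Γ → Γ → ℝ} (hd : IsPseudoMetric d) (x y : Γ) :
    0 ≤ d x y := by
  obtain ⟨hself, hsymm, htriangle⟩ := hd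
  linarith [hself x, hsymm x y, htriangle x y x]

section QuasiLinearSequence

variable {Γ : Type*} [AddMonoid Γ] {d : Γ → Γ → ℝ} {ψ : ℕ → ℝ} {γ : ℕ → Γ}

theorem dist_apply_mul_nsmul_le_sum (hd : IsPseudoMetric d)
    (hlip : ∀ a b c, d (a + b) (a + c) ≤ d b c)
    (hγ : ∀ m n, 1 ≤ m → 1 ≤ n → d (γ (m + n)) (γ m + γ n) ≤ ψ (m + n))
    {m k : ℕ} (hm : 1 ≤ m) (hk : 1 ≤ k) :
    d (γ (m * k)) (m • γ k) ≤ ∑ j ∈ Finset.Ico 1 m, ψ ((j + 1) * k) := by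
  obtain ⟨hself, -, htriangle⟩ := hd
  induction m, hm using Nat.le_induction with
  | base => simp [hself]
  | succ m hm ih =>
    rw [Finset.sum_Ico_succ_top hm, succ_nsmul', Nat.succ_mul, Nat.add_comm (m * k)]
    calc d (γ (k + m * k)) (γ k + m • γ k)
        ≤ d (γ (k + m * k)) (γ k + γ (m * k)) + d (γ k + γ (m * k)) (γ k + m • γ k) :=
          htriangle _ _ _
      _ ≤ ψ (k + m * k) + d (γ (m * k)) (m • γ k) :=
          add_le_add (hγ k (m * k) hk (Nat.mul_pos hm hk)) (hlip _ _ _)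
      _ ≤ ∑ j ∈ Finset.Ico 1 m, ψ ((j + 1) * k) + ψ (k + m * k) := by
          rw [add_comm]
          gcongr

theorem nsmul_action_asymptotically_equivalent_general (hd : IsPseudoMetric d)
    (hlip : ∀ a b c, d (a + b) (a + c) ≤ d b c)
    (hψ : ψ =o[atTop] (fun n : ℕ => (n : ℝ)))
    (hγ : ∀ m n, 1 ≤ m → 1 ≤ n → d (γ (m + n)) (γ m + γ n) ≤ ψ (m + n))
    {m : ℕ} (hm : 1 ≤ m) :
    Tendsto (fun k : ℕ => d (γ (m * k)) (m • γ k) / k) atTop (𝓝 0) := by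
  have hsum : (fun k => ∑ j ∈ Finset.Ico 1 m, ψ ((j + 1) * k)) =o[atTop]
      (fun k : ℕ => (k : ℝ)) :=
    .fun_sum fun j _ => isLittleO_natCast_comp_mul_left hψ j.succ_pos
  refine squeeze_zero' (.of_forall fun k => div_nonneg (hd.nonneg_s12 _ _) k.cast_nonneg) ?_
    hsum.tendsto_div_nhds_zero
  filter_upwards [eventually_ge_atTop 1] with k hk
  exact div_le_div_of_nonneg_right (dist_apply_mul_nsmul_le_sum hd hlip hγ hm hk) k.cast_nonneg

end QuasiLinearSequence

/-- The `m`-fold elementwise sum of a quasi-linear sequence is asymptotically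
equivalent to the sequence `k ↦ γ (m * k)`. -/
theorem nsmul_action_asymptotically_equivalent {Γ : Type*} [AddCommMonoid Γ]
    (d : Γ → Γ → ℝ) (h : IsMetricAbelianMonoid d)
    (φ : ℝ → ℝ) (hφ : Admissible φ) (C : ℝ) (hC : 0 ≤ C)
    (γ : ℕ → Γ) (hγ : QuasiLinear d (fun t => C * φ t) γ)
    (m : ℕ) (hm : 1 ≤ m) :
    Filter.Tendsto (fun k : ℕ => d (γ (m * k)) (m • γ k) / k)
      Filter.atTop (nhds 0) := by
  exact nsmul_action_asymptotically_equivalent_general h.1 h.2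
    (hφ.isLittleO_id.natCast_atTop.const_mul_left C) hγ.2 hm
end

section
/- Let (Γ,+,d) be a metric Abelian monoid, φ an admissible function, and let γ̄₁, γ̄₂ be quasi-linear sequences with defects bounded by C₁·φ and C₂·φ respectively (C₁,C₂ ≥ 0). For λ ∈ ℝ with λ ≥ 0, define the scaled sequences (λ·γ̄ᵢ)(n) := γᵢ(⌊λ·n⌋). Then the ℝ≥0-action is a homothety with respect to the asymptotic distance: lim_{n→∞} (1/n)·d(γ₁(⌊λn⌋), γ₂(⌊λn⌋)) = λ · lim_{n→∞} (1/n)·d(γ₁(n), γ₂(n)). -/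
open MeasureTheory Filter

theorem tendsto_inv_smul_comp_of_tendsto_div {α K E : Type*} [DivisionRing K] [CharZero K]
    [TopologicalSpace K] [AddCommMonoid E] [Module K E] [TopologicalSpace E] [ContinuousSMul K E]
    {l : Filter α} {f : ℕ → E} {L : E} {u : α → ℕ} {v : α → K} {a : K}
    (hf : Tendsto (fun n : ℕ ↦ (n : K)⁻¹ • f n) atTop (nhds L)) (hu : Tendsto u l atTop)
    (huv : Tendsto (fun x ↦ (u x : K) / v x) l (nhds a)) :
    Tendsto (fun x ↦ (v x)⁻¹ • f (u x)) l (nhds (a • L)) := by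
  refine (huv.smul (hf.comp hu)).congr' ?_
  filter_upwards [hu.eventually_ne_atTop 0] with x hx
  have hux : (u x : K) ≠ 0 := Nat.cast_ne_zero.mpr hx
  calc ((u x : K) / v x) • (u x : K)⁻¹ • f (u x)
      = ((v x)⁻¹ * (u x : K) * (u x : K)⁻¹) • f (u x) := by
        rw [smul_smul, div_eq_mul_inv, (Nat.cast_commute (u x) (v x)⁻¹).eq]
    _ = (v x)⁻¹ • f (u x) := by rw [mul_inv_cancel_right₀ hux]

theorem scalar_action_homothety_general {K E : Type*} [Field K] [LinearOrder K]
    [IsStrictOrderedRing K] [FloorRing K] [TopologicalSpace K] [OrderTopology K]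
    [AddCommMonoid E] [Module K E] [TopologicalSpace E] [ContinuousSMul K E]
    {f : ℕ → E} {L : E} {lam : K} (hlam : 0 ≤ lam)
    (hf : Tendsto (fun n : ℕ ↦ (n : K)⁻¹ • f n) atTop (nhds L)) :
    Tendsto (fun n : ℕ ↦ (n : K)⁻¹ • f ⌊lam * n⌋₊) atTop (nhds (lam • L)) := by
  have : Archimedean K := FloorRing.archimedean K
  have hcast : Tendsto (Nat.cast : ℕ → K) atTop atTop := tendsto_natCast_atTop_atTop
  rcases hlam.eq_or_lt with rfl | hpos
  · simpa only [zero_mul, Nat.floor_zero, zero_smul, Function.comp_apply] using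
      (tendsto_inv_atTop_zero.comp hcast).smul_const (f 0)
  · have hfloor : Tendsto (fun n : ℕ ↦ ⌊lam * n⌋₊) atTop atTop :=
      tendsto_nat_floor_mul_atTop lam hpos
    have hratio : Tendsto (fun n : ℕ ↦ (⌊lam * n⌋₊ : K) / n) atTop (nhds lam) :=
      (tendsto_nat_floor_mul_div_atTop hlam).comp hcast
    exact tendsto_inv_smul_comp_of_tendsto_div hf hfloor hratio

/-- The `ℝ≥0`-action `(λ·γ̄)(n) := γ(⌊λ n⌋)` is a homothety for the asymptotic
distance: `dista (λ·γ̄₁) (λ·γ̄₂) = λ * dista γ̄₁ γ̄₂`. -/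
theorem scalar_action_homothety {Γ : Type*} [AddCommMonoid Γ]
    (d : Γ → Γ → ℝ) (h : IsMetricAbelianMonoid d)
    (φ : ℝ → ℝ) (hφ : Admissible φ)
    (C₁ C₂ : ℝ) (hC₁ : 0 ≤ C₁) (hC₂ : 0 ≤ C₂)
    (γ₁ γ₂ : ℕ → Γ)
    (hγ₁ : QuasiLinear d (fun t => C₁ * φ t) γ₁)
    (hγ₂ : QuasiLinear d (fun t => C₂ * φ t) γ₂)
    (lam : ℝ) (hlam : 0 ≤ lam)
    (L : ℝ)
    (hL : Filter.Tendsto (fun n : ℕ => d (γ₁ n) (γ₂ n) / n)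
      Filter.atTop (nhds L)) :
    Filter.Tendsto (fun n : ℕ => d (γ₁ ⌊lam * (n : ℝ)⌋₊) (γ₂ ⌊lam * (n : ℝ)⌋₊) / n)
      Filter.atTop (nhds (lam * L)) := by
  simp only [div_eq_inv_mul] at hL ⊢
  exact scalar_action_homothety_general (f := fun n ↦ d (γ₁ n) (γ₂ n)) hlam hL
end
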